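/- arXiv:2404.16643 — 3 statements merged into one kernel-verified Lean document; each statement's English description precedes it below -/
import Mathlib

section
/- Let L be a finite lattice. For every c ∈ M̃_i(L) and c′ ∈ M̃_j(L), the boundary of the shuffle product satisfies ∂_{i+j+1}(c ⧢ c′) = ∂_i(c) ⧢ c′ + (−1)^{i+1} c ⧢ ∂_j(c′). -/
open Finsupp

noncomputable section

variable (K : Type) [Field K] (L : Type) [SemilatticeSup L]

/-- Order multichains with `n` entries (length `n - 1`) in the lattice `L`:
weakly decreasing tuples `(c₀ ≥ c₁ ≥ ⋯ ≥ c_{n-1})`. -/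
def MChain (n : ℕ) : Type := {c : Fin n → L // Antitone c}

/-- `∂ₖ^{(j)}`: deletion of the `k`-th entry of an order multichain. -/
def mdel {n : ℕ} (k : Fin (n + 1)) (c : MChain L (n + 1)) : MChain L n :=
  ⟨c.1 ∘ k.succAbove, c.2.comp_monotone (Fin.strictMono_succAbove k).monotone⟩

/-- Concatenation `c · c′` of tuples. -/
def concatT {a b n : ℕ} (h : a + b = n) (u : Fin a → L) (v : Fin b → L) : Fin n → L :=
  fun r => if hr : (r : ℕ) < a then u ⟨r, hr⟩ else v ⟨(r : ℕ) - a, by have := r.2; omega⟩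

/-- The operator `τ` sending a tuple `(a₀, …, a_{n-1})` to the multichain
`(a₀ ∨ ⋯ ∨ a_{n-1} ≥ a₁ ∨ ⋯ ∨ a_{n-1} ≥ ⋯ ≥ a_{n-1})` of suffix joins. -/
def tauMul {n : ℕ} (a : Fin n → L) : MChain L n :=
  ⟨fun r => (Finset.Ici r).sup' ⟨r, Finset.mem_Ici.mpr le_rfl⟩ a, by
    intro r r' hrr'
    apply Finset.sup'_le
    intro s hs
    exact Finset.le_sup' _ (Finset.mem_Ici.mpr (le_trans hrr' (Finset.mem_Ici.mp hs)))⟩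

/-- An `(i,j)`-shuffle, in block form: `IsShuffleBlocks t σ` says that the permutation `σ`
is monotone on the preimage of the values `{0, …, t-1}` (the first block) and on the
preimage of the remaining values (the second block).  An `(i,j)`-shuffle of
`{0, 1, …, i+j+1}` is exactly `IsShuffleBlocks (i+1)`. -/
def IsShuffleBlocks {n : ℕ} (t : ℕ) (σ : Equiv.Perm (Fin n)) : Prop :=
  (∀ p q : Fin n, p < q → (σ p : ℕ) < t → (σ q : ℕ) < t → σ p < σ q) ∧
  (∀ p q : Fin n, p < q → t ≤ (σ p : ℕ) → t ≤ (σ q : ℕ) → σ p < σ q)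

/-- The index `ℓ - 1` (with the convention `0 - 1 = 0`). -/
def prevIdx {n : ℕ} (ℓ : Fin n) : Fin n := ⟨(ℓ : ℕ) - 1, by have := ℓ.2; omega⟩

/-- The set `A₁^{i,j}` of pairs `(ℓ, σ)` with `σ` an `(i,j)`-shuffle, `ℓ ≥ 1`,
`σ(ℓ-1) ∈ {0,…,i}` and `σ(ℓ) ∈ {i+1,…,i+j+1}`. -/
def shuffleA1 (i j : ℕ) : Set (Fin (i + j + 2) × Equiv.Perm (Fin (i + j + 2))) :=
  {p | IsShuffleBlocks (i + 1) p.2 ∧ 1 ≤ (p.1 : ℕ) ∧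
       (p.2 (prevIdx p.1) : ℕ) ≤ i ∧ i + 1 ≤ (p.2 p.1 : ℕ)}

/-- The set `A₂^{i,j}` of pairs `(ℓ, σ)` with `σ` an `(i,j)`-shuffle, `ℓ ≥ 1`,
`σ(ℓ-1) ∈ {i+1,…,i+j+1}` and `σ(ℓ) ∈ {0,…,i}`. -/
def shuffleA2 (i j : ℕ) : Set (Fin (i + j + 2) × Equiv.Perm (Fin (i + j + 2))) :=
  {p | IsShuffleBlocks (i + 1) p.2 ∧ 1 ≤ (p.1 : ℕ) ∧
       i + 1 ≤ (p.2 (prevIdx p.1) : ℕ) ∧ (p.2 p.1 : ℕ) ≤ i}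

/-- The set `A₃^{i,j}` of pairs `(ℓ, σ)` with `σ` an `(i,j)`-shuffle and
`σ(ℓ-1), σ(ℓ) ∈ {0,…,i}`, the condition on `σ(ℓ-1)` being regarded as true for `ℓ = 0`. -/
def shuffleA3 (i j : ℕ) : Set (Fin (i + j + 2) × Equiv.Perm (Fin (i + j + 2))) :=
  {p | IsShuffleBlocks (i + 1) p.2 ∧
       (1 ≤ (p.1 : ℕ) → (p.2 (prevIdx p.1) : ℕ) ≤ i) ∧ (p.2 p.1 : ℕ) ≤ i}

/-- `M̃`: the `K`-vector space with basis the order multichains with `n` entries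
(length `n-1`).  In particular `MGrp K L 0 ≅ K` is `M̃₋₁`, spanned by the empty
multichain. -/
abbrev MGrp (n : ℕ) : Type := MChain L n →₀ K

/-- The simplicial boundary `∂ = Σ (-1)^j ∂^{(j)}` on multichains. -/
def mbdry (n : ℕ) : MGrp K L (n + 1) →ₗ[K] MGrp K L n :=
  Finsupp.lsum K fun c => ∑ k : Fin (n + 1), ((-1 : K) ^ (k : ℕ)) • Finsupp.lsingle (mdel L k c)

/-- Transport along an equality of lengths. -/
def castMGrp {a b : ℕ} (h : a = b) : MGrp K L a ≃ₗ[K] MGrp K L b :=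
  Finsupp.domLCongr (Equiv.cast (congrArg (MChain L) h))

open Classical in
/-- The shuffle product of two basis multichains, with `p` resp. `q` entries:
`c ⧢ c′ = Σ_{σ ∈ S_{p-1,q-1}} sgn(σ) · τ((c·c′)_σ)`. -/
def shufPair {p q : ℕ} (c : MChain L p) (c' : MChain L q) : MGrp K L (p + q) :=
  ∑ σ : Equiv.Perm (Fin (p + q)),
    if IsShuffleBlocks p σ then
      ((Equiv.Perm.sign σ : ℤ) : K) • Finsupp.single (tauMul L (concatT L rfl c.1 c'.1 ∘ ⇑σ)) 1
    else 0

/-- The shuffle product `⧢ : M̃_{p-1} ⊗ M̃_{q-1} → M̃_{p+q-1}` as a bilinear map. -/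
def shufLin (p q : ℕ) : MGrp K L p →ₗ[K] MGrp K L q →ₗ[K] MGrp K L (p + q) :=
  Finsupp.lsum K fun c =>
    LinearMap.toSpanSingleton K _
      (Finsupp.lsum K fun c' => LinearMap.toSpanSingleton K _ (shufPair K L c c'))

/-!
Colour the entries of a tuple `a` so that `a` is decreasing on every colour class, and let `σ` run
through the permutations listing each class in increasing order; the shuffle product is the case of
two classes which are consecutive blocks.  Consider the faces of the multichains `τ(a_σ)`.

If `σ(ℓ-1)` and `σ(ℓ)` have different colours, exchanging them yields another shuffle, of opposite
sign, with the same `ℓ`-th face: these faces cancel.  Otherwise `a_{σ(ℓ)} ≤ a_{σ(ℓ-1)}`, so deleting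
the `ℓ`-th entry commutes with `τ`, and the face comes from a shuffle of the entries other than
`v = σ(ℓ)`.  Conversely, a shuffle of the entries other than `v` arises from exactly one `ℓ`, since
`v` can only be inserted right behind its predecessor in its class, or at the front if it has none.
The sign `(-1)^ℓ sgn σ` becomes `(-1)^v` times the sign of the smaller shuffle.  Hence the boundary
of a signed sum over shuffles is the alternating sum, over the removed entry `v`, of the signed sums
for the remaining entries; the entries of the two blocks give the two terms of the formula.
-/

section SuffixJoins

variable {L}

theorem tauMul_le_iff {n : ℕ} {b : Fin n → L} {r : Fin n} {x : L} :
    (tauMul L b).1 r ≤ x ↔ ∀ s, r ≤ s → b s ≤ x :=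
  (Finset.sup'_le_iff Finset.nonempty_Ici b).trans (by simp only [Finset.mem_Ici])

theorem le_tauMul {n : ℕ} (b : Fin n → L) {r s : Fin n} (hrs : r ≤ s) : b s ≤ (tauMul L b).1 r :=
  tauMul_le_iff.mp le_rfl s hrs

theorem tauMul_comp_le {m n : ℕ} (b : Fin n → L) {e : Fin m → Fin n} {r : Fin m} {r' : Fin n}
    (he : ∀ s, r ≤ s → r' ≤ e s) : (tauMul L (b ∘ e)).1 r ≤ (tauMul L b).1 r' :=
  tauMul_le_iff.mpr fun s hs => le_tauMul b (he s hs)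

theorem le_swap_prevIdx {n : ℕ} {ℓ r s : Fin n} (hr : r ≠ ℓ) (hrs : r ≤ s) :
    r ≤ Equiv.swap (prevIdx ℓ) ℓ s := by
  rw [Equiv.swap_apply_def]
  split_ifs <;> simp only [Fin.ext_iff, Fin.le_def, prevIdx, ne_eq] at * <;> omega

theorem mdel_tauMul_comp_swap {n : ℕ} (ℓ : Fin (n + 1)) (b : Fin (n + 1) → L) :
    mdel L ℓ (tauMul L (b ∘ Equiv.swap (prevIdx ℓ) ℓ)) = mdel L ℓ (tauMul L b) := by
  have hle (b : Fin (n + 1) → L) (r : Fin n) :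
      (mdel L ℓ (tauMul L (b ∘ Equiv.swap (prevIdx ℓ) ℓ))).1 r ≤ (mdel L ℓ (tauMul L b)).1 r :=
    tauMul_comp_le b fun _ => le_swap_prevIdx (Fin.succAbove_ne ℓ r)
  refine Subtype.ext (funext fun r => (hle b r).antisymm ?_)
  simpa [Function.comp_def] using hle (b ∘ Equiv.swap (prevIdx ℓ) ℓ) r

-- Since `prevIdx 0 = 0`, this covers `ℓ = 0`, where deletion always commutes with `τ`.
theorem mdel_tauMul_of_le_prevIdx {n : ℕ} {ℓ : Fin (n + 1)} {b : Fin (n + 1) → L}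
    (hb : b ℓ ≤ b (prevIdx ℓ)) : mdel L ℓ (tauMul L b) = tauMul L (b ∘ ℓ.succAbove) := by
  refine Subtype.ext (funext fun r => le_antisymm (tauMul_le_iff.mpr fun s hs => ?_)
    (tauMul_comp_le b fun s hs => (Fin.strictMono_succAbove ℓ).monotone hs))
  have le_of_ne (s : Fin (n + 1)) (hs : ℓ.succAbove r ≤ s) (hsℓ : s ≠ ℓ) :
      b s ≤ (tauMul L (b ∘ ℓ.succAbove)).1 r := by
    obtain ⟨s, rfl⟩ := Fin.exists_succAbove_eq hsℓ
    exact le_tauMul (b ∘ ℓ.succAbove) (Fin.succAbove_le_succAbove_iff.mp hs)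
  by_cases hsℓ : s = ℓ
  · subst hsℓ
    have hlt : s.succAbove r < s := hs.lt_of_ne (Fin.succAbove_ne s r)
    refine hb.trans (le_of_ne _ ?_ ?_) <;>
      simp only [Fin.ext_iff, Fin.lt_def, Fin.le_def, prevIdx, ne_eq] at * <;> omega
  · exact le_of_ne s hs hsℓ

end SuffixJoins

section InsertPerm

variable {n : ℕ}

/-- The permutation matrix of `σ` with a new row and column inserted: it sends `ℓ` to `v` and acts
as `σ` between the complements of `ℓ` and `v`. -/
def insertPerm (ℓ v : Fin (n + 1)) (σ : Equiv.Perm (Fin n)) : Equiv.Perm (Fin (n + 1)) :=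
  v.cycleRange⁻¹ * Equiv.Perm.decomposeFin.symm (0, σ) * ℓ.cycleRange

@[simp]
theorem insertPerm_apply_self (ℓ v : Fin (n + 1)) (σ : Equiv.Perm (Fin n)) :
    insertPerm ℓ v σ ℓ = v := by
  simp [insertPerm, Equiv.Perm.inv_def]

@[simp]
theorem insertPerm_apply_succAbove (ℓ v : Fin (n + 1)) (σ : Equiv.Perm (Fin n)) (x : Fin n) :
    insertPerm ℓ v σ (ℓ.succAbove x) = v.succAbove (σ x) := by
  simp [insertPerm, Equiv.Perm.inv_def]

@[simp]
theorem insertPerm_symm_apply_self (ℓ v : Fin (n + 1)) (σ : Equiv.Perm (Fin n)) :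
    (insertPerm ℓ v σ).symm v = ℓ := by
  simp [Equiv.symm_apply_eq]

@[simp]
theorem insertPerm_symm_apply_succAbove (ℓ v : Fin (n + 1)) (σ : Equiv.Perm (Fin n)) (x : Fin n) :
    (insertPerm ℓ v σ).symm (v.succAbove x) = ℓ.succAbove (σ.symm x) := by
  simp [Equiv.symm_apply_eq]

theorem sign_insertPerm (ℓ v : Fin (n + 1)) (σ : Equiv.Perm (Fin n)) :
    Equiv.Perm.sign (insertPerm ℓ v σ) = (-1) ^ (v : ℕ) * Equiv.Perm.sign σ * (-1) ^ (ℓ : ℕ) := by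
  simp [insertPerm, Fin.sign_cycleRange]

theorem insertPerm_bijective (ℓ : Fin (n + 1)) :
    Function.Bijective fun p : Fin (n + 1) × Equiv.Perm (Fin n) => insertPerm ℓ p.1 p.2 := by
  refine (Fintype.bijective_iff_injective_and_card _).mpr ⟨?_, ?_⟩
  · rintro ⟨v, σ⟩ ⟨w, τ⟩ h
    obtain rfl : v = w := by simpa using DFunLike.congr_fun h ℓ
    refine Prod.ext rfl (Equiv.ext fun x => ?_)
    simpa using DFunLike.congr_fun h (ℓ.succAbove x)
  · simp [Fintype.card_perm, Nat.factorial_succ]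

end InsertPerm

section Shuffles

variable {n : ℕ} {ι : Type*}

/-- A shuffle of the colour classes of `f`: the permutation `σ` lists the elements of each class
in increasing order, i.e. `σ.symm` is strictly increasing on every fibre of `f`.  The classes need
not be intervals. -/
def IsShuffle (f : Fin n → ι) (σ : Equiv.Perm (Fin n)) : Prop :=
  ∀ ⦃u v : Fin n⦄, u < v → f u = f v → σ.symm u < σ.symm v

theorem isShuffle_iff_apply_lt_apply {f : Fin n → ι} {σ : Equiv.Perm (Fin n)} :
    IsShuffle f σ ↔ ∀ p q, p < q → f (σ p) = f (σ q) → σ p < σ q := by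
  constructor
  · intro h p q hpq hf
    by_contra! hle
    have := h (hle.lt_of_ne (σ.injective.ne hpq.ne')) hf.symm
    simp only [Equiv.symm_apply_apply] at this
    exact this.asymm hpq
  · intro h u v huv hf
    by_contra! hle
    have := h _ _ (hle.lt_of_ne (σ.symm.injective.ne huv.ne')) (by simpa using hf.symm)
    simp only [Equiv.apply_symm_apply] at this
    exact this.asymm huv

theorem IsShuffle.apply_prevIdx_le {f : Fin n → ι} {σ : Equiv.Perm (Fin n)} (hσ : IsShuffle f σ)
    {ℓ : Fin n} (hℓ : f (σ (prevIdx ℓ)) = f (σ ℓ)) : σ (prevIdx ℓ) ≤ σ ℓ := by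
  have hle : prevIdx ℓ ≤ ℓ := Nat.sub_le _ _
  obtain heq | hlt := hle.eq_or_lt
  · rw [heq]
  · exact (isShuffle_iff_apply_lt_apply.mp hσ _ _ hlt hℓ).le

theorem swap_prevIdx_lt_swap_prevIdx {ℓ p q : Fin n} (hpq : p < q)
    (hne : ¬(p = prevIdx ℓ ∧ q = ℓ)) :
    Equiv.swap (prevIdx ℓ) ℓ p < Equiv.swap (prevIdx ℓ) ℓ q := by
  rw [Equiv.swap_apply_def, Equiv.swap_apply_def]
  split_ifs <;> simp only [Fin.ext_iff, Fin.lt_def, prevIdx] at * <;> omega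

theorem IsShuffle.mul_swap_prevIdx {f : Fin n → ι} {σ : Equiv.Perm (Fin n)} (hσ : IsShuffle f σ)
    {ℓ : Fin n} (hℓ : f (σ (prevIdx ℓ)) ≠ f (σ ℓ)) :
    IsShuffle f (σ * Equiv.swap (prevIdx ℓ) ℓ) := by
  intro u v huv hf
  refine swap_prevIdx_lt_swap_prevIdx (hσ huv hf) ?_
  rintro ⟨hu, hv⟩
  rw [← hu, ← hv, Equiv.apply_symm_apply, Equiv.apply_symm_apply] at hℓ
  exact hℓ hf

open Classical in
/-- The position at which `v` has to be inserted into the shuffle `σ` of the remaining elements in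
order to follow immediately the largest smaller element of its own colour; it is `0` if there is
no such element. -/
def insertPos (f : Fin (n + 1) → ι) (v : Fin (n + 1)) (σ : Equiv.Perm (Fin n)) : Fin (n + 1) :=
  ({x | v.succAbove x < v ∧ f (v.succAbove x) = f v} : Finset (Fin n)).sup fun x => (σ.symm x).succ

theorem insertPos_le_iff {f : Fin (n + 1) → ι} {v ℓ : Fin (n + 1)} {σ : Equiv.Perm (Fin n)} :
    insertPos f v σ ≤ ℓ ↔
      ∀ x, v.succAbove x < v → f (v.succAbove x) = f v → (σ.symm x).succ ≤ ℓ := by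
  simp [insertPos]

theorem isShuffle_insertPerm_iff {f : Fin (n + 1) → ι} {ℓ v : Fin (n + 1)}
    {σ : Equiv.Perm (Fin n)} :
    IsShuffle f (insertPerm ℓ v σ) ↔
      IsShuffle (f ∘ v.succAbove) σ ∧ insertPos f v σ ≤ ℓ ∧
        ∀ x, v < v.succAbove x → f v = f (v.succAbove x) → ℓ ≤ (σ.symm x).castSucc := by
  simp only [IsShuffle, insertPos_le_iff, Fin.forall_iff_succAbove v, insertPerm_symm_apply_self,
    insertPerm_symm_apply_succAbove, Fin.succAbove_lt_succAbove_iff,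
    Fin.lt_succAbove_iff_le_castSucc, Fin.succAbove_lt_iff_succ_le, lt_self_iff_false,
    false_imp_iff, true_and, forall_and, Function.comp_apply]
  tauto

theorem insertPos_eq_zero_or_exists_eq_succ (f : Fin (n + 1) → ι) (v : Fin (n + 1))
    (σ : Equiv.Perm (Fin n)) :
    insertPos f v σ = 0 ∨
      ∃ x, f (v.succAbove x) = f v ∧ insertPos f v σ = (σ.symm x).succ := by
  classical
  rw [insertPos]
  generalize hs : ({x | v.succAbove x < v ∧ f (v.succAbove x) = f v} : Finset (Fin n)) = s
  obtain rfl | hne := s.eq_empty_or_nonempty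
  · exact Or.inl Finset.sup_empty
  · obtain ⟨x, hx, hsup⟩ := s.exists_mem_eq_sup hne fun x => (σ.symm x).succ
    rw [← hs, Finset.mem_filter] at hx
    exact Or.inr ⟨x, hx.2.2, hsup⟩

theorem succ_succAbove_eq_prevIdx (x : Fin n) : x.succ.succAbove x = prevIdx x.succ :=
  Fin.succAbove_succ_self x

theorem apply_insertPerm_prevIdx_insertPos (f : Fin (n + 1) → ι) (v : Fin (n + 1))
    (σ : Equiv.Perm (Fin n)) :
    f (insertPerm (insertPos f v σ) v σ (prevIdx (insertPos f v σ))) = f v := by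
  obtain h | ⟨x, hx, h⟩ := insertPos_eq_zero_or_exists_eq_succ f v σ
  · rw [h, show prevIdx (0 : Fin (n + 1)) = 0 from rfl, insertPerm_apply_self]
  · rw [h, ← succ_succAbove_eq_prevIdx, insertPerm_apply_succAbove, Equiv.apply_symm_apply, hx]

theorem isShuffle_insertPerm_insertPos {f : Fin (n + 1) → ι} {v : Fin (n + 1)}
    {σ : Equiv.Perm (Fin n)} (hσ : IsShuffle (f ∘ v.succAbove) σ) :
    IsShuffle f (insertPerm (insertPos f v σ) v σ) := by
  refine isShuffle_insertPerm_iff.mpr ⟨hσ, le_rfl, fun x hx hfx => ?_⟩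
  refine insertPos_le_iff.mpr fun y hy hfy => Fin.succ_le_castSucc_iff.mpr (hσ ?_ (hfy.trans hfx))
  exact Fin.succAbove_lt_succAbove_iff.mp (hy.trans hx)

theorem le_insertPos {f : Fin (n + 1) → ι} {ℓ v : Fin (n + 1)} {σ : Equiv.Perm (Fin n)}
    (hσ : IsShuffle f (insertPerm ℓ v σ)) (hℓ : f (insertPerm ℓ v σ (prevIdx ℓ)) = f v) :
    ℓ ≤ insertPos f v σ := by
  induction ℓ using Fin.cases with
  | zero => exact Fin.zero_le _
  | succ x =>
    have hle := hσ.apply_prevIdx_le (by rw [hℓ, insertPerm_apply_self])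
    rw [insertPerm_apply_self] at hle
    rw [← succ_succAbove_eq_prevIdx, insertPerm_apply_succAbove] at hℓ hle
    have hlt := hle.lt_of_ne (Fin.succAbove_ne v _)
    simpa using insertPos_le_iff.mp (le_refl (insertPos f v σ)) (σ x) hlt hℓ

theorem isShuffle_insertPerm_and_apply_prevIdx_eq_iff {f : Fin (n + 1) → ι} {ℓ v : Fin (n + 1)}
    {σ : Equiv.Perm (Fin n)} :
    IsShuffle f (insertPerm ℓ v σ) ∧ f (insertPerm ℓ v σ (prevIdx ℓ)) = f v ↔
      IsShuffle (f ∘ v.succAbove) σ ∧ ℓ = insertPos f v σ := by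
  constructor
  · rintro ⟨hσ, hℓ⟩
    obtain ⟨hσ', hle, -⟩ := isShuffle_insertPerm_iff.mp hσ
    exact ⟨hσ', (le_insertPos hσ hℓ).antisymm hle⟩
  · rintro ⟨hσ, rfl⟩
    exact ⟨isShuffle_insertPerm_insertPos hσ, apply_insertPerm_prevIdx_insertPos f v σ⟩

end Shuffles

section ShuffleSum

variable {L} {ι : Type*} {n : ℕ}

open Classical in
/-- The signed sum of `τ(a_σ)` over all shuffles `σ` of the colour classes of `f`.  For two colours
marking consecutive blocks this is the shuffle product of the two blocks of `a`. -/
def shuffleSum (f : Fin n → ι) (a : Fin n → L) : MGrp K L n :=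
  ∑ σ with IsShuffle f σ, ((Equiv.Perm.sign σ : ℤ) : K) • single (tauMul L (a ∘ σ)) 1

/-- The contribution of the `ℓ`-th face of `τ(a_σ)` to the boundary of a `shuffleSum`. -/
def signedFace (a : Fin (n + 1) → L) (ℓ : Fin (n + 1)) (σ : Equiv.Perm (Fin (n + 1))) :
    MGrp K L n :=
  ((-1 : K) ^ (ℓ : ℕ) * ((Equiv.Perm.sign σ : ℤ) : K)) • single (mdel L ℓ (tauMul L (a ∘ σ))) 1

theorem mbdry_single (c : MChain L (n + 1)) :
    mbdry K L n (single c 1) = ∑ k : Fin (n + 1), (-1 : K) ^ (k : ℕ) • single (mdel L k c) 1 := by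
  simp [mbdry]

open Classical in
theorem mbdry_shuffleSum_eq_sum_signedFace (f : Fin (n + 1) → ι) (a : Fin (n + 1) → L) :
    mbdry K L n (shuffleSum K f a) = ∑ ℓ, ∑ σ with IsShuffle f σ, signedFace K a ℓ σ := by
  simp only [shuffleSum, signedFace, map_sum, map_smul, mbdry_single, Finset.smul_sum, smul_smul]
  rw [Finset.sum_comm]
  simp only [mul_comm]

theorem signedFace_mul_swap {a : Fin (n + 1) → L} {ℓ : Fin (n + 1)}
    {σ : Equiv.Perm (Fin (n + 1))} (hℓ : prevIdx ℓ ≠ ℓ) :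
    signedFace K a ℓ (σ * Equiv.swap (prevIdx ℓ) ℓ) = -signedFace K a ℓ σ := by
  rw [signedFace, Equiv.Perm.coe_mul, ← Function.comp_assoc, mdel_tauMul_comp_swap,
    Equiv.Perm.sign_mul, Equiv.Perm.sign_swap hℓ]
  simp [signedFace]

open Classical in
theorem sum_signedFace_of_apply_prevIdx_ne (f : Fin (n + 1) → ι) (a : Fin (n + 1) → L)
    (ℓ : Fin (n + 1)) :
    ∑ σ with IsShuffle f σ ∧ f (σ (prevIdx ℓ)) ≠ f (σ ℓ), signedFace K a ℓ σ = 0 := by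
  have hne {σ : Equiv.Perm (Fin (n + 1))} (hσ : f (σ (prevIdx ℓ)) ≠ f (σ ℓ)) : prevIdx ℓ ≠ ℓ :=
    fun h => hσ (by rw [h])
  refine Finset.sum_involution (fun σ _ => σ * Equiv.swap (prevIdx ℓ) ℓ) (fun σ hσ => ?_)
    (fun σ hσ _ => ?_) (fun σ hσ => ?_) (fun σ _ => by simp [mul_assoc])
  all_goals obtain ⟨hσ, hℓ⟩ := (Finset.mem_filter.mp hσ).2
  · rw [signedFace_mul_swap K (hne hℓ), add_neg_cancel]
  · rw [Ne, mul_eq_left, Equiv.swap_eq_one_iff]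
    exact hne hℓ
  · simpa using ⟨hσ.mul_swap_prevIdx hℓ, hℓ.symm⟩

theorem signedFace_insertPerm {a : Fin (n + 1) → L} {ℓ v : Fin (n + 1)} {σ : Equiv.Perm (Fin n)}
    (ha : a v ≤ a (insertPerm ℓ v σ (prevIdx ℓ))) :
    signedFace K a ℓ (insertPerm ℓ v σ) =
      ((-1 : K) ^ (v : ℕ) * ((Equiv.Perm.sign σ : ℤ) : K)) •
        single (tauMul L ((a ∘ v.succAbove) ∘ σ)) 1 := by
  have hcomp : (a ∘ insertPerm ℓ v σ) ∘ ℓ.succAbove = (a ∘ v.succAbove) ∘ σ := by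
    ext x
    simp
  have hsq : (-1 : K) ^ (ℓ : ℕ) * (-1) ^ (ℓ : ℕ) = 1 := by simp [← mul_pow]
  rw [signedFace, mdel_tauMul_of_le_prevIdx (by simpa using ha), hcomp, sign_insertPerm]
  push_cast
  congr 1
  linear_combination ((-1 : K) ^ (v : ℕ) * ((Equiv.Perm.sign σ : ℤ) : K)) * hsq

open Classical in
theorem sum_signedFace_insertPerm {f : Fin (n + 1) → ι} {a : Fin (n + 1) → L}
    (ha : ∀ u v, u ≤ v → f u = f v → a v ≤ a u) (v : Fin (n + 1)) (σ : Equiv.Perm (Fin n)) :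
    (∑ ℓ, if IsShuffle f (insertPerm ℓ v σ) ∧ f (insertPerm ℓ v σ (prevIdx ℓ)) = f v then
        signedFace K a ℓ (insertPerm ℓ v σ) else 0) =
      if IsShuffle (f ∘ v.succAbove) σ then
        ((-1 : K) ^ (v : ℕ) * ((Equiv.Perm.sign σ : ℤ) : K)) •
          single (tauMul L ((a ∘ v.succAbove) ∘ σ)) 1
      else 0 := by
  simp only [isShuffle_insertPerm_and_apply_prevIdx_eq_iff, ite_and]
  split_ifs with hσ
  · rw [Finset.sum_ite_eq' Finset.univ (insertPos f v σ), if_pos (Finset.mem_univ _)]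
    have hcol := apply_insertPerm_prevIdx_insertPos f v σ
    have hle := (isShuffle_insertPerm_insertPos hσ).apply_prevIdx_le
      (by rw [hcol, insertPerm_apply_self])
    rw [insertPerm_apply_self] at hle
    exact signedFace_insertPerm K (ha _ _ hle hcol)
  · exact Finset.sum_const_zero

theorem mbdry_shuffleSum {f : Fin (n + 1) → ι} {a : Fin (n + 1) → L}
    (ha : ∀ u v, u ≤ v → f u = f v → a v ≤ a u) :
    mbdry K L n (shuffleSum K f a) =
      ∑ v : Fin (n + 1), (-1 : K) ^ (v : ℕ) • shuffleSum K (f ∘ v.succAbove) (a ∘ v.succAbove) := by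
  classical
  calc mbdry K L n (shuffleSum K f a)
    _ = ∑ ℓ, ∑ σ with IsShuffle f σ, signedFace K a ℓ σ :=
      mbdry_shuffleSum_eq_sum_signedFace K f a
    _ = ∑ ℓ, ∑ σ with IsShuffle f σ ∧ f (σ (prevIdx ℓ)) = f (σ ℓ), signedFace K a ℓ σ := by
      refine Finset.sum_congr rfl fun ℓ _ => ?_
      rw [← Finset.sum_filter_add_sum_filter_not _ fun σ => f (σ (prevIdx ℓ)) = f (σ ℓ),
        Finset.filter_filter, Finset.filter_filter, sum_signedFace_of_apply_prevIdx_ne, add_zero]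
    _ = ∑ ℓ, ∑ p : Fin (n + 1) × Equiv.Perm (Fin n),
          if IsShuffle f (insertPerm ℓ p.1 p.2) ∧
            f (insertPerm ℓ p.1 p.2 (prevIdx ℓ)) = f p.1 then
          signedFace K a ℓ (insertPerm ℓ p.1 p.2) else 0 := by
      refine Finset.sum_congr rfl fun ℓ _ => ?_
      rw [Finset.sum_filter, ← (insertPerm_bijective ℓ).sum_comp]
      simp only [insertPerm_apply_self]
    _ = ∑ v : Fin (n + 1), (-1 : K) ^ (v : ℕ) •
          shuffleSum K (f ∘ v.succAbove) (a ∘ v.succAbove) := by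
      rw [Finset.sum_comm, Fintype.sum_prod_type]
      simp only [sum_signedFace_insertPerm K ha, shuffleSum, Finset.smul_sum, smul_smul,
        Finset.sum_filter, smul_ite, smul_zero]

end ShuffleSum

section Blocks

variable {X : Type} {p q n : ℕ}

theorem val_succAbove (v : Fin (n + 1)) (x : Fin n) :
    (v.succAbove x : ℕ) = if (x : ℕ) < v then (x : ℕ) else x + 1 := by
  simp only [Fin.succAbove, Fin.lt_def, Fin.val_castSucc]
  split_ifs <;> simp

theorem concatT_comp_succAbove_of_val_eq (h : p + 1 + q = n + 1) (h' : p + q = n)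
    (u : Fin (p + 1) → X) (w : Fin q → X) {k : Fin (p + 1)} {v : Fin (n + 1)}
    (hv : (v : ℕ) = k) :
    concatT X h u w ∘ v.succAbove = concatT X h' (u ∘ k.succAbove) w := by
  ext x
  have := k.2
  have hx := val_succAbove v x
  simp only [concatT, Function.comp_apply]
  split_ifs at hx ⊢
  all_goals first
    | omega
    | (congr 1; ext; simp only [val_succAbove]; split_ifs <;> omega)

theorem concatT_comp_succAbove_of_val_eq_add (h : p + (q + 1) = n + 1) (h' : p + q = n)
    (u : Fin p → X) (w : Fin (q + 1) → X) {k : Fin (q + 1)} {v : Fin (n + 1)}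
    (hv : (v : ℕ) = p + k) :
    concatT X h u w ∘ v.succAbove = concatT X h' u (w ∘ k.succAbove) := by
  ext x
  have hx := val_succAbove v x
  simp only [concatT, Function.comp_apply]
  split_ifs at hx ⊢
  all_goals first
    | omega
    | (congr 1; ext; simp only [val_succAbove]; split_ifs <;> omega)

/-- The two-colouring of `Fin n` whose classes are the first `p` and the last `q` elements. -/
def blockColor (h : p + q = n) : Fin n → Bool :=
  concatT Bool h (fun _ => true) fun _ => false

theorem blockColor_eq_iff (h : p + q = n) {x y : Fin n} :
    blockColor h x = blockColor h y ↔ ((x : ℕ) < p ↔ (y : ℕ) < p) := by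
  unfold blockColor concatT
  split_ifs <;> simp [*]

theorem isShuffle_blockColor_iff (h : p + q = n) {σ : Equiv.Perm (Fin n)} :
    IsShuffle (blockColor h) σ ↔ IsShuffleBlocks p σ := by
  simp only [isShuffle_iff_apply_lt_apply, blockColor_eq_iff, IsShuffleBlocks, ← not_lt]
  grind

variable {L}

theorem concatT_le_of_blockColor_eq (h : p + q = n) (c : MChain L p) (c' : MChain L q)
    (x y : Fin n) (hxy : x ≤ y) (hcol : blockColor h x = blockColor h y) :
    concatT L h c.1 c'.1 y ≤ concatT L h c.1 c'.1 x := by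
  rw [blockColor_eq_iff] at hcol
  rw [Fin.le_def] at hxy
  unfold concatT
  split_ifs with hy hx hx
  · exact c.2 (Fin.mk_le_mk.mpr hxy)
  · exact absurd (hcol.mpr hy) hx
  · exact absurd (hcol.mp hx) hy
  · exact c'.2 (Fin.mk_le_mk.mpr (by omega))

theorem castMGrp_refl (x : MGrp K L n) : castMGrp K L rfl x = x := by
  simp [castMGrp]

theorem castMGrp_castMGrp {a b c : ℕ} (h : a = b) (h' : b = c) (x : MGrp K L a) :
    castMGrp K L h' (castMGrp K L h x) = castMGrp K L (h.trans h') x := by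
  subst h h'
  simp only [castMGrp_refl]

theorem castMGrp_shufPair (h : p + q = n) (c : MChain L p) (c' : MChain L q) :
    castMGrp K L h (shufPair K L c c') = shuffleSum K (blockColor h) (concatT L h c.1 c'.1) := by
  subst h
  classical
  rw [castMGrp_refl, shufPair, shuffleSum, Finset.sum_filter]
  exact Finset.sum_congr rfl fun σ _ => if_congr (isShuffle_blockColor_iff rfl).symm rfl rfl

theorem mbdry_shufPair {i j : ℕ} (c : MChain L (i + 1)) (c' : MChain L (j + 1)) :
    mbdry K L (i + 1 + j) (shufPair K L (p := i + 1) (q := j + 1) c c') =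
      ∑ k : Fin (i + 1), (-1 : K) ^ (k : ℕ) •
          castMGrp K L (show i + (j + 1) = i + 1 + j by omega) (shufPair K L (mdel L k c) c') +
        (-1 : K) ^ (i + 1) •
          ∑ k : Fin (j + 1), (-1 : K) ^ (k : ℕ) • shufPair K L c (mdel L k c') := by
  have hsum := castMGrp_shufPair K rfl c c'
  rw [castMGrp_refl] at hsum
  rw [hsum, mbdry_shuffleSum K (n := i + 1 + j) (concatT_le_of_blockColor_eq rfl c c'),
    Finset.smul_sum]
  refine (Fin.sum_univ_add (a := i + 1) (b := j + 1) _).trans (congrArg₂ (· + ·) ?_ ?_)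
  · refine Finset.sum_congr rfl fun k _ => ?_
    have hk : (Fin.castAdd (j + 1) k : ℕ) = k := rfl
    rw [castMGrp_shufPair, blockColor, concatT_comp_succAbove_of_val_eq _ _ _ _ hk,
      concatT_comp_succAbove_of_val_eq _ _ _ _ hk]
    rfl
  · refine Finset.sum_congr rfl fun k _ => ?_
    have hk : (Fin.natAdd (i + 1) k : ℕ) = i + 1 + k := rfl
    rw [← castMGrp_refl K (shufPair K L c (mdel L k c')), castMGrp_shufPair, blockColor,
      concatT_comp_succAbove_of_val_eq_add _ _ _ _ hk,
      concatT_comp_succAbove_of_val_eq_add _ _ _ _ hk, smul_smul, ← pow_add]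
    rfl

theorem shufLin_single (c : MChain L p) (c' : MChain L q) :
    shufLin K L p q (single c 1) (single c' 1) = shufPair K L c c' := by
  simp [shufLin]

end Blocks

theorem shuffle_boundary_formula_general {i j n : ℕ} (hl : (i + 1) + j = n)
    (hr : i + (j + 1) = n) (c : MGrp K L (i + 1)) (c' : MGrp K L (j + 1)) :
    castMGrp K L hl (mbdry K L ((i + 1) + j) (shufLin K L (i + 1) (j + 1) c c')) =
      castMGrp K L hr (shufLin K L i (j + 1) (mbdry K L i c) c') +
        ((-1 : K) ^ (i + 1)) •
          castMGrp K L hl (shufLin K L (i + 1) j c (mbdry K L j c')) := by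
  have hbilin :
      (shufLin K L (i + 1) (j + 1)).compr₂
          ((castMGrp K L hl).toLinearMap ∘ₗ mbdry K L (i + 1 + j)) =
        (shufLin K L i (j + 1)).compr₂ (castMGrp K L hr).toLinearMap ∘ₗ mbdry K L i +
          (-1 : K) ^ (i + 1) •
            ((shufLin K L (i + 1) j).compl₂ (mbdry K L j)).compr₂
              (castMGrp K L hl).toLinearMap := by
    refine Finsupp.lhom_ext' fun x => LinearMap.ext_ring ?_
    refine Finsupp.lhom_ext' fun y => LinearMap.ext_ring ?_
    change castMGrp K L hl (mbdry K L _ (shufLin K L (i + 1) (j + 1) (single x 1) (single y 1))) =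
      castMGrp K L hr (shufLin K L i (j + 1) (mbdry K L i (single x 1)) (single y 1)) +
        (-1 : K) ^ (i + 1) •
          castMGrp K L hl (shufLin K L (i + 1) j (single x 1) (mbdry K L j (single y 1)))
    rw [shufLin_single, mbdry_shufPair, mbdry_single, mbdry_single]
    simp only [map_add, map_sum, map_smul, LinearMap.sum_apply, LinearMap.smul_apply,
      shufLin_single, castMGrp_castMGrp]
  exact LinearMap.congr_fun₂ hbilin c c'

/-- **boundary formula for the shuffle product.**  For every
`c ∈ M̃_i(L)` and `c′ ∈ M̃_j(L)` (encoded as elements of the spaces spanned by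
multichains with `i+1` resp. `j+1` entries),
`∂_{i+j+1}(c ⧢ c′) = ∂_i(c) ⧢ c′ + (-1)^{i+1} · (c ⧢ ∂_j(c′))`. -/
theorem shuffle_boundary_formula [Fintype L] (i j : ℕ)
    (c : MGrp K L (i + 1)) (c' : MGrp K L (j + 1)) :
    castMGrp K L (show (i + 1) + j = i + j + 1 by omega)
        (mbdry K L ((i + 1) + j) (shufLin K L (i + 1) (j + 1) c c')) =
      castMGrp K L (show i + (j + 1) = i + j + 1 by omega)
          (shufLin K L i (j + 1) (mbdry K L i c) c') +
        ((-1 : K) ^ (i + 1)) •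
          castMGrp K L (show (i + 1) + j = i + j + 1 by omega)
            (shufLin K L (i + 1) j c (mbdry K L j c')) := by
  exact shuffle_boundary_formula_general K L _ _ c c'

end
end

section
/- Let P be a finite poset, J ⊆ P an order ideal, and (S_*(P), δ_*, φ) a synor complex for P. Then φ induces an isomorphism of relative homology H_*(S(P), S(P)^J) ≅ H̃_*(P, J), where H̃_*(P, J) is the relative reduced simplicial homology of the pair of order complexes. -/
open Finsupp

noncomputable section

variable (K : Type) [Field K]

section Core
variable (P : Type) [Preorder P]

/-- Order chains with `n` elements of the poset `P`, written as strictly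
decreasing tuples `(x₀ > x₁ > ⋯ > x_{n-1})`. -/
def OChain (n : ℕ) : Type := {c : Fin n → P // StrictAnti c}

/-- The chain group in "level" `n`: the `K`-vector space with basis the order chains with
`n` elements.  Level `n` corresponds to homological degree `n - 1`; in particular
`CGrp K P 0 ≅ K` is the reduced part `C̃₋₁`. -/
abbrev CGrp (n : ℕ) : Type := OChain P n →₀ K

/-- Deletion of the `k`-th entry of an order chain. -/
def odel {n : ℕ} (k : Fin (n + 1)) (c : OChain P (n + 1)) : OChain P n :=
  ⟨c.1 ∘ k.succAbove, c.2.comp_strictMono (Fin.strictMono_succAbove k)⟩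

/-- The simplicial boundary map (of the reduced simplicial chain complex of the order
complex), from level `n+1` to level `n`. -/
def cbdry (n : ℕ) : CGrp K P (n + 1) →ₗ[K] CGrp K P n :=
  Finsupp.lsum K fun c => ∑ k : Fin (n + 1), ((-1 : K) ^ (k : ℕ)) • Finsupp.lsingle (odel P k c)

/-- The cycles in level `n` (every level-0 chain, i.e. multiple of the empty chain,
is a cycle). -/
def cyclesAt : (n : ℕ) → Submodule K (CGrp K P n)
  | 0 => ⊤
  | (n + 1) => LinearMap.ker (cbdry K P n)

/-- The boundaries in level `n`. -/
def boundariesIn (n : ℕ) : Submodule K (CGrp K P n) :=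
  LinearMap.range (cbdry K P n)

/-- `H̃_{n-1}(P) ≠ 0`: nontriviality of the reduced simplicial homology (with coefficients
in `K`) of the order complex of `P` in degree `n - 1` (level `n`). -/
def RHomNontrivial (n : ℕ) : Prop := ¬ cyclesAt K P n ≤ boundariesIn K P n

/-- The subspace of chains all of whose elements lie in the subset `J ⊆ P`
(the chain group of the subposet `J`). -/
def chainsIn (J : Set P) (n : ℕ) : Submodule K (CGrp K P n) :=
  Finsupp.supported K K {c : OChain P n | ∀ r, c.1 r ∈ J}

/-- Transport of chain groups along an equality of levels. -/
def castCGrp {a b : ℕ} (h : a = b) : CGrp K P a ≃ₗ[K] CGrp K P b :=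
  Finsupp.domLCongr (Equiv.cast (congrArg (OChain P) h))

end Core


section Synor
variable (P : Type) [PartialOrder P]

/-- For a family `S` of graded pieces (with `S n x` the piece of homological degree `n`,
i.e. level `n+1`, sitting over `x ∈ P`) and a subset `J ⊆ P`, the part of the complex
lying over `J`: at level `0` it is all of `C̃₋₁ = K`, and at level `n+1` it is
`⊕_{x ∈ J} S_n^{(x)}`. -/
def idealPart (S : (n : ℕ) → P → Submodule K (CGrp K P (n + 1))) (J : Set P) :
    (nn : ℕ) → Submodule K (CGrp K P nn)
  | 0 => ⊤
  | (n + 1) => ⨆ x ∈ J, S n x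

/-- A synor complex for the finite poset `P`: a strictly `P`-graded subcomplex
`S_*(P) ⊆ C̃_*(P)` of the reduced simplicial chain complex of the order complex of `P`
(we identify the injective `P`-graded chain map `φ` with the inclusion of its image) with:
`S_i(P) = ⊕_{x ∈ P} S_i(P)^{(x)}` with `S_i(P)^{(x)}` contained in the span of the order
chains with largest element `x` (`graded`); `∂(S_i(P)^{(x)}) ⊆ ⊕_{y<x} S_{i-1}(P)^{(y)}`
(`strict`; for degree `0` the boundary lands in `C̃₋₁ = K` automatically); (S1)
`dim_K S_i(P)^{(x)} = dim_K H̃_{i-1}(P_{<x})` (`dim_eq`, the dimension of the reduced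
homology being the dimension of the cycles minus the dimension of the boundaries); and
(S2) for every order ideal `J ⊆ P` the inclusion `S_*(P)^J ⊆ C̃_*(J)` induces an
isomorphism on homology (`quasiIso`: surjectivity and injectivity of the induced map). -/
structure SynorComplex : Type where
  S : (n : ℕ) → P → Submodule K (CGrp K P (n + 1))
  graded : ∀ (n : ℕ) (x : P),
    S n x ≤ Finsupp.supported K K {c : OChain P (n + 1) | c.1 0 = x}
  strict : ∀ (n : ℕ) (x : P), ∀ f ∈ S (n + 1) x,
    cbdry K P (n + 1) f ∈ ⨆ y ∈ Set.Iio x, S n y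
  dim_eq : ∀ (n : ℕ) (x : P),
    Module.finrank K ↥(S n x) =
      Module.finrank K ↥(cyclesAt K {y : P // y < x} n) -
        Module.finrank K ↥(boundariesIn K {y : P // y < x} n)
  quasiIso : ∀ J : Set P, IsLowerSet J → ∀ nn : ℕ,
    (∀ z ∈ cyclesAt K P nn ⊓ chainsIn K P J nn,
        ∃ a ∈ cyclesAt K P nn ⊓ idealPart K P S J nn,
          z - a ∈ Submodule.map (cbdry K P nn) (chainsIn K P J (nn + 1))) ∧
    (∀ a ∈ idealPart K P S J nn,
        a ∈ Submodule.map (cbdry K P nn) (chainsIn K P J (nn + 1)) →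
        a ∈ Submodule.map (cbdry K P nn) (idealPart K P S J (nn + 1)))

end Synor

section Rel
variable (P : Type) [PartialOrder P]

/-- The relative cycles of the pair `(P, J)` at level `nn`: chains whose boundary is
supported in `J`.  (At level `0` every chain is a relative cycle, since the relative
complex has trivial part in level `-1`.) -/
def relCycles (J : Set P) : (nn : ℕ) → Submodule K (CGrp K P nn)
  | 0 => ⊤
  | (nn + 1) => Submodule.comap (cbdry K P nn) (chainsIn K P J nn)

/-- The relative boundaries of the pair `(P, J)` at level `nn`: sums of boundaries of
arbitrary chains and chains supported in `J`. -/
def relBoundaries (J : Set P) (nn : ℕ) : Submodule K (CGrp K P nn) :=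
  boundariesIn K P nn ⊔ chainsIn K P J nn

/-- The relative cycles of the pair `(S_*(P), S_*(P)^J)` at level `nn`. -/
def relCyclesS (σ : SynorComplex K P) (J : Set P) : (nn : ℕ) → Submodule K (CGrp K P nn)
  | 0 => ⊤
  | (nn + 1) => idealPart K P σ.S Set.univ (nn + 1) ⊓
      Submodule.comap (cbdry K P nn) (idealPart K P σ.S J nn)

/-- The relative boundaries of the pair `(S_*(P), S_*(P)^J)` at level `nn`. -/
def relBoundariesS (σ : SynorComplex K P) (J : Set P) (nn : ℕ) :
    Submodule K (CGrp K P nn) :=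
  Submodule.map (cbdry K P nn) (idealPart K P σ.S Set.univ (nn + 1)) ⊔ idealPart K P σ.S J nn

end Rel

/-!
The inclusions `S(P)^J ⊆ C̃(J)` and `S(P) ⊆ C̃(P)` are quasi-isomorphisms by (S2), applied to the
order ideals `J` and `P`, so the five lemma for the long exact sequences of the two pairs gives the
claim.  Surjectivity and injectivity are the two four lemmas, chased for a pair of subcomplexes
`E ⊆ T` inside a pair `D ⊆ C`, so that neither quotients nor connecting maps have to be formed.
-/

section RelativeHomology

variable {R M₀ M₁ M₂ : Type*} [Ring R] [AddCommGroup M₀] [AddCommGroup M₁] [AddCommGroup M₂]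
  [Module R M₀] [Module R M₁] [Module R M₂]

/-- The relative cycles of a pair of subcomplexes `B ⊆ A`, as representatives in `A`; the lower
index is the level. -/
def relativeCycles (d : M₁ →ₗ[R] M₀) (A₁ : Submodule R M₁) (B₀ : Submodule R M₀) :
    Submodule R M₁ :=
  A₁ ⊓ B₀.comap d

/-- The relative boundaries of a pair of subcomplexes `B ⊆ A`, as representatives in `A`: they
contain `B₁`, so that the relative homology is `relativeCycles` modulo `relativeBoundaries`. -/
def relativeBoundaries (d : M₂ →ₗ[R] M₁) (A₂ : Submodule R M₂) (B₁ : Submodule R M₁) :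
    Submodule R M₁ :=
  A₂.map d ⊔ B₁

variable {d : M₁ →ₗ[R] M₀} {d' : M₂ →ₗ[R] M₁}
  {C₁ D₁ E₁ T₁ : Submodule R M₁} {C₂ D₂ T₂ : Submodule R M₂} {D₀ E₀ T₀ : Submodule R M₀}

theorem relativeCycles_le_sup_relativeBoundaries (hET : E₀ ≤ T₀) (hDC : D₁ ≤ C₁) (hTC : T₁ ≤ C₁)
    (surj_D : C₁.map d ⊓ D₀ ≤ E₀ ⊔ D₁.map d)
    (inj_C : T₀ ⊓ C₁.map d ≤ T₁.map d)
    (surj_C : LinearMap.ker d ⊓ C₁ ≤ LinearMap.ker d ⊓ T₁ ⊔ C₂.map d') :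
    relativeCycles d C₁ D₀ ≤ relativeCycles d T₁ E₀ ⊔ relativeBoundaries d' C₂ D₁ := by
  rintro z ⟨hzC, hzD⟩
  obtain ⟨a, haE, _, ⟨w, hw, rfl⟩, ha⟩ :=
    Submodule.mem_sup.1 (surj_D ⟨Submodule.mem_map_of_mem hzC, hzD⟩)
  have hzw : d (z - w) = a := by rw [map_sub, ← ha, add_sub_cancel_right]
  have hzwC : z - w ∈ C₁ := sub_mem hzC (hDC hw)
  obtain ⟨s, hsT, hs⟩ := inj_C ⟨hET haE, z - w, hzwC, hzw⟩
  have hcycle : d (z - w - s) = 0 := by rw [map_sub, hzw, hs, sub_self]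
  obtain ⟨b, ⟨hb, hbT⟩, v, hv, hbv⟩ :=
    Submodule.mem_sup.1 (surj_C ⟨hcycle, sub_mem hzwC (hTC hsT)⟩)
  have hsbE : d (s + b) ∈ E₀ := by rwa [map_add, hs, LinearMap.mem_ker.1 hb, add_zero]
  refine Submodule.mem_sup.2
    ⟨s + b, ⟨add_mem hsT hbT, hsbE⟩, v + w, Submodule.add_mem_sup hv hw, ?_⟩
  rw [add_assoc, ← add_assoc b, hbv]
  abel

theorem relativeCycles_inf_relativeBoundaries_le (hd : d ∘ₗ d' = 0) (hDC : D₂ ≤ C₂)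
    (hED : E₁ ≤ D₁) (hET : E₁ ≤ T₁)
    (inj_D : E₀ ⊓ D₁.map d ≤ E₁.map d)
    (surj_D : LinearMap.ker d ⊓ D₁ ≤ E₁ ⊔ D₂.map d')
    (inj_C : T₁ ⊓ C₂.map d' ≤ T₂.map d') :
    relativeCycles d T₁ E₀ ⊓ relativeBoundaries d' C₂ D₁ ≤ relativeBoundaries d' T₂ E₁ := by
  rintro a ⟨⟨haT, haE⟩, ha⟩
  obtain ⟨_, ⟨c, hc, rfl⟩, w, hw, rfl⟩ := Submodule.mem_sup.1 ha
  have hdw : d w = d (d' c + w) := by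
    rw [map_add, ← LinearMap.comp_apply, hd, LinearMap.zero_apply, zero_add]
  obtain ⟨s, hsE, hs⟩ := inj_D ⟨haE, w, hw, hdw⟩
  have hcycle : d (w - s) = 0 := by rw [map_sub, hs, hdw, sub_self]
  obtain ⟨b, hbE, _, ⟨v, hv, rfl⟩, hbv⟩ :=
    Submodule.mem_sup.1 (surj_D ⟨hcycle, sub_mem hw (hED hsE)⟩)
  have hsbE : s + b ∈ E₁ := add_mem hsE hbE
  have hboundary : d' (c + v) = d' c + w - (s + b) := by
    rw [map_add, eq_sub_of_add_eq' hbv]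
    abel
  have hmem : d' c + w - (s + b) ∈ T₂.map d' :=
    inj_C ⟨sub_mem haT (hET hsbE), c + v, add_mem hc (hDC hv), hboundary⟩
  exact Submodule.mem_sup.2 ⟨_, hmem, s + b, hsbE, sub_add_cancel _ _⟩

end RelativeHomology

section OrderComplex

variable (P : Type) [Preorder P]

lemma odel_odel {n : ℕ} (i : Fin (n + 2)) (j : Fin (n + 1)) (c : OChain P (n + 2)) :
    odel P (j.predAbove i) (odel P (i.succAbove j) c) = odel P j (odel P i c) :=
  Subtype.ext <| funext fun k =>
    congrArg c.1 (Fin.succAbove_succAbove_succAbove_predAbove i j k)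

lemma cbdry_single (n : ℕ) (c : OChain P (n + 1)) (r : K) :
    cbdry K P n (single c r) =
      ∑ k : Fin (n + 1), ((-1 : K) ^ (k : ℕ)) • single (odel P k c) r := by
  simp [cbdry]

lemma cbdry_cbdry_single (n : ℕ) (c : OChain P (n + 2)) (r : K) :
    cbdry K P n (cbdry K P (n + 1) (single c r)) = 0 := by
  have hdouble : cbdry K P n (cbdry K P (n + 1) (single c r)) =
      ∑ p : Fin (n + 2) × Fin (n + 1),
        (-1 : K) ^ (p.1 + p.2 : ℕ) • single (odel P p.2 (odel P p.1 c)) r := by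
    simp only [cbdry_single, map_sum, map_smul, Finset.smul_sum, smul_smul, ← pow_add,
      Fintype.sum_prod_type]
  rw [hdouble]
  -- Deleting the same two entries in the other order gives the same chain with opposite sign.
  refine Finset.sum_involution (fun p _ => (p.1.succAbove p.2, p.2.predAbove p.1))
    ?_ ?_ (fun _ _ => Finset.mem_univ _) ?_
  · rintro ⟨i, j⟩ -
    simp only [odel_odel, Fin.neg_one_pow_succAbove_add_predAbove, neg_smul, add_neg_cancel]
  · rintro ⟨i, j⟩ - - h
    exact Fin.succAbove_ne i j (congrArg Prod.fst h)
  · rintro ⟨i, j⟩ -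
    simp only [Fin.succAbove_succAbove_predAbove, Fin.predAbove_predAbove_succAbove]

theorem cbdry_comp_cbdry (n : ℕ) : cbdry K P n ∘ₗ cbdry K P (n + 1) = 0 :=
  Finsupp.lhom_ext (cbdry_cbdry_single K P n)

lemma boundariesIn_le_cyclesAt : ∀ n : ℕ, boundariesIn K P n ≤ cyclesAt K P n
  | 0 => le_top
  | n + 1 => LinearMap.range_le_ker_iff.2 (cbdry_comp_cbdry K P n)

lemma chainsIn_univ (n : ℕ) : chainsIn K P Set.univ n = ⊤ := by
  simp [chainsIn, Finsupp.supported_univ]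

lemma chainsIn_zero (J : Set P) : chainsIn K P J 0 = ⊤ := by
  simp [chainsIn, Finsupp.supported_univ]

lemma chainsIn_mono {I J : Set P} (h : I ⊆ J) (n : ℕ) : chainsIn K P I n ≤ chainsIn K P J n :=
  Finsupp.supported_mono fun _ hc r => h (hc r)

end OrderComplex

section Pair

variable (P : Type) [PartialOrder P]

lemma relCycles_succ (J : Set P) (n : ℕ) :
    relCycles K P J (n + 1) =
      relativeCycles (cbdry K P n) (chainsIn K P Set.univ (n + 1)) (chainsIn K P J n) := by
  rw [relativeCycles, chainsIn_univ, top_inf_eq, relCycles]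

lemma relBoundaries_eq_relativeBoundaries (J : Set P) (n : ℕ) :
    relBoundaries K P J n =
      relativeBoundaries (cbdry K P n) (chainsIn K P Set.univ (n + 1)) (chainsIn K P J n) := by
  rw [relativeBoundaries, chainsIn_univ, Submodule.map_top, relBoundaries, boundariesIn]

lemma relBoundaries_zero (J : Set P) : relBoundaries K P J 0 = ⊤ := by
  rw [relBoundaries, chainsIn_zero, sup_top_eq]

lemma idealPart_mono (S : (n : ℕ) → P → Submodule K (CGrp K P (n + 1))) {I J : Set P}
    (h : I ⊆ J) : ∀ n, idealPart K P S I n ≤ idealPart K P S J n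
  | 0 => le_rfl
  | _ + 1 => biSup_mono h

end Pair

namespace SynorComplex

variable {K} {P : Type} [PartialOrder P] (σ : SynorComplex K P) {J : Set P}

lemma relBoundariesS_zero (J : Set P) : relBoundariesS K P σ J 0 = ⊤ :=
  sup_top_eq _

lemma idealPart_le_chainsIn (hJ : IsLowerSet J) :
    ∀ n, idealPart K P σ.S J n ≤ chainsIn K P J n
  | 0 => (chainsIn_zero K P J).ge
  | n + 1 => iSup₂_le fun x hx => (σ.graded n x).trans <|
      Finsupp.supported_mono fun c (hc : c.1 0 = x) r =>
        hJ (c.2.antitone (Fin.zero_le r)) (hc ▸ hx)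

lemma cyclesAt_inf_chainsIn_le (hJ : IsLowerSet J) (n : ℕ) :
    cyclesAt K P n ⊓ chainsIn K P J n ≤
      cyclesAt K P n ⊓ idealPart K P σ.S J n ⊔ (chainsIn K P J (n + 1)).map (cbdry K P n) :=
  fun z hz =>
    let ⟨a, ha, hza⟩ := (σ.quasiIso J hJ n).1 z hz
    Submodule.mem_sup.2 ⟨a, ha, z - a, hza, add_sub_cancel a z⟩

lemma map_chainsIn_inf_chainsIn_le (hJ : IsLowerSet J) (I : Set P) (n : ℕ) :
    (chainsIn K P I (n + 1)).map (cbdry K P n) ⊓ chainsIn K P J n ≤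
      idealPart K P σ.S J n ⊔ (chainsIn K P J (n + 1)).map (cbdry K P n) :=
  have hcycles : (chainsIn K P I (n + 1)).map (cbdry K P n) ≤ cyclesAt K P n :=
    LinearMap.map_le_range.trans (boundariesIn_le_cyclesAt K P n)
  (inf_le_inf_right _ hcycles).trans <|
    (σ.cyclesAt_inf_chainsIn_le hJ n).trans (sup_le_sup_right inf_le_right _)

lemma idealPart_inf_map_chainsIn_le (hJ : IsLowerSet J) (n : ℕ) :
    idealPart K P σ.S J n ⊓ (chainsIn K P J (n + 1)).map (cbdry K P n) ≤
      (idealPart K P σ.S J (n + 1)).map (cbdry K P n) :=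
  fun a ha => (σ.quasiIso J hJ n).2 a ha.1 ha.2

theorem relCycles_le (hJ : IsLowerSet J) :
    ∀ n, relCycles K P J n ≤ relCyclesS K P σ J n ⊔ relBoundaries K P J n
  | 0 => le_top.trans (relBoundaries_zero K P J ▸ le_sup_right)
  | n + 1 => by
    rw [relCycles_succ, relBoundaries_eq_relativeBoundaries]
    exact relativeCycles_le_sup_relativeBoundaries
      (idealPart_mono K P σ.S (Set.subset_univ J) n)
      (chainsIn_mono K P (Set.subset_univ J) (n + 1))
      (σ.idealPart_le_chainsIn isLowerSet_univ (n + 1))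
      (σ.map_chainsIn_inf_chainsIn_le hJ Set.univ n)
      (σ.idealPart_inf_map_chainsIn_le isLowerSet_univ n)
      (σ.cyclesAt_inf_chainsIn_le isLowerSet_univ (n + 1))

theorem relCyclesS_inf_relBoundaries_le (hJ : IsLowerSet J) :
    ∀ n, relCyclesS K P σ J n ⊓ relBoundaries K P J n ≤ relBoundariesS K P σ J n
  | 0 => le_top.trans (σ.relBoundariesS_zero J).ge
  | n + 1 => by
    rw [relBoundaries_eq_relativeBoundaries]
    exact relativeCycles_inf_relativeBoundaries_le (cbdry_comp_cbdry K P n)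
      (chainsIn_mono K P (Set.subset_univ J) (n + 2))
      (σ.idealPart_le_chainsIn hJ (n + 1))
      (idealPart_mono K P σ.S (Set.subset_univ J) (n + 1))
      (σ.idealPart_inf_map_chainsIn_le hJ n)
      ((σ.cyclesAt_inf_chainsIn_le hJ (n + 1)).trans (sup_le_sup_right inf_le_right _))
      (σ.idealPart_inf_map_chainsIn_le isLowerSet_univ (n + 1))

end SynorComplex

theorem synor_relative_homology_iso_general (P : Type) [PartialOrder P]
    (J : Set P) (hJ : IsLowerSet J) (σ : SynorComplex K P) (nn : ℕ) :
    (∀ z ∈ relCycles K P J nn,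
        ∃ a ∈ relCyclesS K P σ J nn, z - a ∈ relBoundaries K P J nn) ∧
    (∀ a ∈ relCyclesS K P σ J nn,
        a ∈ relBoundaries K P J nn → a ∈ relBoundariesS K P σ J nn) := by
  constructor
  · intro z hz
    obtain ⟨a, ha, b, hb, rfl⟩ := Submodule.mem_sup.1 (σ.relCycles_le hJ nn hz)
    exact ⟨a, ha, by rwa [add_sub_cancel_left]⟩
  · exact fun a ha hab => σ.relCyclesS_inf_relBoundaries_le hJ nn ⟨ha, hab⟩

/-- Let `P` be a finite poset, `J ⊆ P` an order ideal and
`(S_*(P), δ_*, φ)` a synor complex for `P` (identified with a subcomplex of `C̃_*(P)`).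
Then `φ` (i.e. the inclusion) induces an isomorphism of relative homology
`H_*(S(P), S(P)^J) ≅ H̃_*(P, J)`: every relative cycle of `(C̃(P), C̃(J))` is, modulo
relative boundaries, a relative cycle of `(S(P), S(P)^J)` (surjectivity), and every
relative cycle of `(S(P), S(P)^J)` that is a relative boundary in `(C̃(P), C̃(J))` is a
relative boundary in `(S(P), S(P)^J)` (injectivity). -/
theorem synor_relative_homology_iso (P : Type) [PartialOrder P] [Fintype P]
    (J : Set P) (hJ : IsLowerSet J) (σ : SynorComplex K P) (nn : ℕ) :
    (∀ z ∈ relCycles K P J nn,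
        ∃ a ∈ relCyclesS K P σ J nn, z - a ∈ relBoundaries K P J nn) ∧
    (∀ a ∈ relCyclesS K P σ J nn,
        a ∈ relBoundaries K P J nn → a ∈ relBoundariesS K P σ J nn) :=
  synor_relative_homology_iso_general K P J hJ σ nn

end
end

section
/- Let P be a finite poset, S_*(P) ⊆ C̃_*(P) a synor complex for P, x ∈ P, and γ ∈ S_m(P)^{(x)} a principal synor chain (so γ = x*ζ for a cycle ζ). Let 1 ≤ j ≤ ℓ ≤ m and let γ = Σ_{χ ∈ X_ℓ^γ} χ*ζ_χ be the ℓ-representation of γ. Then for every equivalence class [χ] of the relation ∼_j on X_ℓ^γ, one has Σ_{χ′ ∈ [χ]} ζ_{χ′} = 0. -/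
/-!
The point is that all faces `d_k γ` with `k ≥ 1` of a principal chain `γ` over `x` vanish. The
order chains occurring in `∂ γ` do not start with `x`, and neither do those of `d_0 γ`, whereas
those of `d_k γ` with `k ≥ 1` do; hence `∂ γ = d_0 γ` and `∑_{k ≥ 1} (-1)^k d_k γ = 0`. By induction
the positive faces of `∂ γ` vanish, so `d_0 d_{k+1} γ = d_k d_0 γ = d_k ∂ γ = 0` for `k ≥ 1`, which
gives `d_{k+1} γ = 0` because prepending `x` inverts `d_0`. Only `k = 1` is left in the alternating
sum, so `d_1 γ = 0` too.

For `j ≤ ℓ` the face operator acts on prefixes only, so `0 = d_j γ = ∑_χ (d_j χ) * ζ_χ`. Distinct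
prefixes give disjoint sets of chains, and `χ ∼_j χ'` means `d_j χ = d_j χ'`: comparing the parts
with a given prefix yields the vanishing of the class sums.
-/

open Finsupp

noncomputable section

variable (K : Type) [Field K]

section Repr
variable (P : Type) [PartialOrder P]

/-- Concatenation `χ * c` of two order chains, valid when every entry of `c` is strictly
below every entry of `χ`. -/
def concatOC {a b : ℕ} (χ : OChain P a) (c : OChain P b)
    (h : ∀ (s : Fin b) (r : Fin a), c.1 s < χ.1 r) : OChain P (a + b) :=
  ⟨fun r => if hr : (r : ℕ) < a then χ.1 ⟨r, hr⟩
            else c.1 ⟨(r : ℕ) - a, by have := r.2; omega⟩, by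
    intro p q hpq
    dsimp only
    rcases lt_or_ge (q : ℕ) a with hq | hq
    · have hp : (p : ℕ) < a := by have := Fin.lt_def.mp hpq; omega
      rw [dif_pos hp, dif_pos hq]
      exact χ.2 (Fin.mk_lt_mk.mpr (Fin.lt_def.mp hpq))
    · rw [dif_neg (not_lt.mpr hq)]
      rcases lt_or_ge (p : ℕ) a with hp | hp
      · rw [dif_pos hp]
        exact h _ _
      · rw [dif_neg (not_lt.mpr hp)]
        exact c.2 (Fin.mk_lt_mk.mpr (by have := Fin.lt_def.mp hpq; omega))⟩

open Classical in
/-- The linear map `χ * (-)` prepending the order chain `χ` to every order chain of a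
chain (declared as `0` on the basis chains that are not entirely below `χ`). -/
def prependC {a b : ℕ} (χ : OChain P a) : CGrp K P b →ₗ[K] CGrp K P (a + b) :=
  Finsupp.lsum K fun c =>
    if h : ∀ (s : Fin b) (r : Fin a), c.1 s < χ.1 r then
      Finsupp.lsingle (concatOC P χ c h)
    else 0

/-- `X_ℓ^γ` (for `s = ℓ + 1`): the set of order chains with `s` elements occurring as
initial segments of order chains in the support of `γ`. -/
def initSegs {m : ℕ} (γ : CGrp K P (m + 1)) (s : ℕ) (h : s ≤ m + 1) :
    Set (OChain P s) :=
  {χ | ∃ c ∈ γ.support, ∀ r : Fin s, c.1 (Fin.castLE h r) = χ.1 r}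

end Repr

section Faces

variable {K} {P : Type} [Preorder P]

/-- The `k`-th face operator `d_k` on chains, deleting the `k`-th entry of every order chain, so
that `∂ = ∑ k, (-1) ^ k • d_k`. -/
def face {n : ℕ} (k : Fin (n + 1)) : CGrp K P (n + 1) →ₗ[K] CGrp K P n :=
  Finsupp.lmapDomain K K (odel P k)

theorem cbdry_eq_sum_face {n : ℕ} (γ : CGrp K P (n + 1)) :
    cbdry K P n γ = ∑ k : Fin (n + 1), (-1 : K) ^ (k : ℕ) • face k γ := by
  induction γ using Finsupp.induction_linear with
  | zero => simp
  | add f g hf hg => simp [hf, hg, Finset.sum_add_distrib]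
  | single c a => simp [cbdry, face, Finsupp.mapDomain_single]

theorem face_zero_face_succ {n : ℕ} (k : Fin (n + 1)) (γ : CGrp K P (n + 2)) :
    face 0 (face k.succ γ) = face k (face 0 γ) := by
  have odel_zero_odel_succ : odel P 0 ∘ odel P k.succ = odel P k ∘ odel P 0 := by
    funext c
    apply Subtype.ext
    funext i
    simp [odel]
  simp only [face, Finsupp.lmapDomain_apply, ← Finsupp.mapDomain_comp, odel_zero_odel_succ]

theorem face_mem_supported {n : ℕ} {k : Fin (n + 1)} {γ : CGrp K P (n + 1)}
    {s : Set (OChain P (n + 1))} {t : Set (OChain P n)} (hγ : γ ∈ Finsupp.supported K K s)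
    (hst : Set.MapsTo (odel P k) s t) : face k γ ∈ Finsupp.supported K K t :=
  Finsupp.supported_comap_lmapDomain K K _ _ (Finsupp.supported_mono hst hγ)

/-- The chains all of whose order chains have largest element `x`, the paper's `C̃_n(P)^{(x)}`. -/
def chainsOver {n : ℕ} (x : P) : Submodule K (CGrp K P (n + 1)) :=
  Finsupp.supported K K {c : OChain P (n + 1) | c.1 0 = x}

theorem face_succ_mem_chainsOver {n : ℕ} {x : P} (k : Fin (n + 1)) {γ : CGrp K P (n + 2)}
    (hγ : γ ∈ chainsOver x) : face k.succ γ ∈ chainsOver x :=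
  face_mem_supported hγ fun c hc => (congrArg c.1 (Fin.succ_succAbove_zero k)).trans hc

theorem eq_zero_of_face_zero_eq_zero {n : ℕ} {x : P} {γ : CGrp K P (n + 1)}
    (hγ : γ ∈ chainsOver x) (h : face 0 γ = 0) : γ = 0 := by
  have odel_injOn : Set.InjOn (odel P 0) {c : OChain P (n + 1) | c.1 0 = x} := by
    intro c hc c' hc' hcc'
    refine Subtype.ext (funext (Fin.cases (hc.trans hc'.symm) fun i => ?_))
    simpa [odel] using congrFun (congrArg Subtype.val hcc') i
  exact (LinearMap.disjoint_ker.1 (Finsupp.lmapDomain_disjoint_ker K K _ odel_injOn)) γ hγ h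

theorem sum_face_succ_eq_zero {n : ℕ} {x : P} {γ : CGrp K P (n + 2)} (hγ : γ ∈ chainsOver x)
    (hbdry : cbdry K P (n + 1) γ ∈ Finsupp.supported K K {c : OChain P (n + 1) | c.1 0 ≠ x}) :
    ∑ k : Fin (n + 1), (-1 : K) ^ (k.succ : ℕ) • face k.succ γ = 0 := by
  have hface_zero : face 0 γ ∈ Finsupp.supported K K {c : OChain P (n + 1) | c.1 0 ≠ x} :=
    face_mem_supported hγ fun c hc => ((c.2 (Fin.succ_pos 0)).trans_eq hc).ne
  have hdisjoint : Disjoint (chainsOver x)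
      (Finsupp.supported K K {c : OChain P (n + 1) | c.1 0 ≠ x}) :=
    Finsupp.disjoint_supported_supported
      (disjoint_compl_right (a := {c : OChain P (n + 1) | c.1 0 = x}))
  refine Submodule.disjoint_def.1 hdisjoint _
    (Submodule.sum_smul_mem _ _ fun k _ => face_succ_mem_chainsOver k hγ) ?_
  rw [cbdry_eq_sum_face, Fin.sum_univ_succ, Fin.val_zero, pow_zero, one_smul] at hbdry
  exact (Submodule.add_mem_iff_right _ hface_zero).1 hbdry

theorem cbdry_eq_face_zero {n : ℕ} {x : P} {γ : CGrp K P (n + 2)} (hγ : γ ∈ chainsOver x)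
    (hbdry : cbdry K P (n + 1) γ ∈ Finsupp.supported K K {c : OChain P (n + 1) | c.1 0 ≠ x}) :
    cbdry K P (n + 1) γ = face 0 γ := by
  rw [cbdry_eq_sum_face, Fin.sum_univ_succ, sum_face_succ_eq_zero hγ hbdry]
  simp

end Faces

section StrictlyGraded

variable {K} {P : Type}

/-- The pieces `S n x` form a strictly `P`-graded subcomplex of the chain complex of `P`: the part
of the definition of a synor complex that does not mention homology. -/
structure IsStrictlyGraded [Preorder P] (S : (n : ℕ) → P → Submodule K (CGrp K P (n + 1))) :
    Prop where
  graded : ∀ n x, S n x ≤ chainsOver x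
  strict : ∀ n x, ∀ γ ∈ S (n + 1) x, cbdry K P (n + 1) γ ∈ ⨆ y ∈ Set.Iio x, S n y

theorem SynorComplex.isStrictlyGraded [PartialOrder P] (σ : SynorComplex K P) :
    IsStrictlyGraded σ.S :=
  ⟨σ.graded, σ.strict⟩

namespace IsStrictlyGraded

variable [Preorder P] {S : (n : ℕ) → P → Submodule K (CGrp K P (n + 1))}

theorem cbdry_mem_supported (hS : IsStrictlyGraded S) {m : ℕ} {x : P} {γ : CGrp K P (m + 2)}
    (hγ : γ ∈ S (m + 1) x) :
    cbdry K P (m + 1) γ ∈ Finsupp.supported K K {c : OChain P (m + 1) | c.1 0 ≠ x} := by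
  have hle : ⨆ y ∈ Set.Iio x, S m y ≤
      Finsupp.supported K K {c : OChain P (m + 1) | c.1 0 ≠ x} :=
    iSup₂_le fun y hy => (hS.graded m y).trans
      (Finsupp.supported_mono fun c hc => (hc.trans_lt hy).ne)
  exact hle (hS.strict m x γ hγ)

theorem face_eq_zero (hS : IsStrictlyGraded S) {m : ℕ} {x : P} {γ : CGrp K P (m + 1)}
    (hγ : γ ∈ S m x) {k : Fin (m + 1)} (hk : k ≠ 0) : face k γ = 0 := by
  induction m generalizing x with
  | zero => exact absurd (Fin.fin_one_eq_zero k) hk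
  | succ m ih =>
    have htop := hS.graded (m + 1) x hγ
    have hbdry := hS.cbdry_mem_supported hγ
    have hface_cbdry {i : Fin (m + 1)} (hi : i ≠ 0) : face i (cbdry K P (m + 1) γ) = 0 := by
      have hker : ⨆ y ∈ Set.Iio x, S m y ≤ LinearMap.ker (face (K := K) i) :=
        iSup₂_le fun y _ δ hδ => ih hδ hi
      exact hker (hS.strict m x γ hγ)
    have hface_succ {i : Fin (m + 1)} (hi : i ≠ 0) : face i.succ γ = 0 := by
      refine eq_zero_of_face_zero_eq_zero (face_succ_mem_chainsOver i htop) ?_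
      rw [face_zero_face_succ, ← cbdry_eq_face_zero htop hbdry, hface_cbdry hi]
    obtain ⟨i, rfl⟩ := Fin.exists_succ_eq.2 hk
    obtain rfl | hi := eq_or_ne i 0
    · -- All other terms of the alternating sum of the positive faces already vanish.
      have hsum := sum_face_succ_eq_zero htop hbdry
      rw [Fintype.sum_eq_single 0 fun i hi => by rw [hface_succ hi, smul_zero]] at hsum
      simpa using hsum
    · exact hface_succ hi

end IsStrictlyGraded

end StrictlyGraded

section Tuples

variable {K} {P : Type}

/-- A chain as a finitely supported function on arbitrary tuples. Prepending is total on tuples,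
whereas `prependC` is junk on chains that are not below the prefix. -/
def toTuples [Preorder P] {n : ℕ} : CGrp K P n →ₗ[K] (Fin n → P) →₀ K :=
  Finsupp.lmapDomain K K fun c : OChain P n => c.1

theorem toTuples_injective [Preorder P] {n : ℕ} :
    Function.Injective (toTuples : CGrp K P n →ₗ[K] (Fin n → P) →₀ K) :=
  Finsupp.mapDomain_injective Subtype.val_injective

theorem toTuples_face [Preorder P] {n : ℕ} (k : Fin (n + 1)) (γ : CGrp K P (n + 1)) :
    toTuples (face k γ) = (toTuples γ).mapDomain k.removeNth := by
  simp only [toTuples, face, Finsupp.lmapDomain_apply, ← Finsupp.mapDomain_comp]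
  rfl

theorem toTuples_castCGrp [Preorder P] {a b : ℕ} (h : a = b) (γ : CGrp K P a) :
    toTuples (castCGrp K P h γ) = (toTuples γ).mapDomain (· ∘ Fin.cast h.symm) := by
  subst h
  have hcast : castCGrp K P rfl γ = γ := by ext; simp [castCGrp]
  rw [hcast]
  exact Finsupp.mapDomain_id.symm

/-- The chains lying entirely below `χ`, that is, those `ζ` for which `χ * ζ` makes sense. -/
def chainsBelow [Preorder P] {a b : ℕ} (χ : OChain P a) : Submodule K (CGrp K P b) :=
  Finsupp.supported K K {c : OChain P b | ∀ (s : Fin b) (r : Fin a), c.1 s < χ.1 r}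

theorem concatOC_val [PartialOrder P] {a b : ℕ} (χ : OChain P a) (c : OChain P b)
    (h : ∀ (s : Fin b) (r : Fin a), c.1 s < χ.1 r) :
    (concatOC P χ c h).1 = Fin.append χ.1 c.1 := by
  funext r
  induction r using Fin.addCases <;> simp [concatOC]

theorem toTuples_prependC [PartialOrder P] {a b : ℕ} {χ : OChain P a} {ζ : CGrp K P b}
    (hζ : ζ ∈ chainsBelow χ) :
    toTuples (prependC K P χ ζ) = (toTuples ζ).mapDomain (Fin.append χ.1) := by
  have hterm : ∀ c ∈ ζ.support, toTuples (prependC K P χ (Finsupp.single c (ζ c))) =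
      Finsupp.single (Fin.append χ.1 c.1) (ζ c) := fun c hc => by
    have hbelow : ∀ (s : Fin b) (r : Fin a), c.1 s < χ.1 r := hζ hc
    simp [prependC, toTuples, hbelow, concatOC_val, Finsupp.mapDomain_single]
  calc toTuples (prependC K P χ ζ)
      = ∑ c ∈ ζ.support, toTuples (prependC K P χ (Finsupp.single c (ζ c))) := by
        conv_lhs => rw [← ζ.sum_single, Finsupp.sum, map_sum, map_sum]
    _ = ∑ c ∈ ζ.support, Finsupp.single (Fin.append χ.1 c.1) (ζ c) :=
        Finset.sum_congr rfl hterm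
    _ = (toTuples ζ).mapDomain (Fin.append χ.1) := by
        simp only [toTuples, Finsupp.lmapDomain_apply, ← Finsupp.mapDomain_comp]
        rfl

theorem removeNth_append_comp_cast {α : Type*} {a b n : ℕ} (h : a + 1 + b = n + 1)
    (j : Fin (a + 1)) (u : Fin (a + 1) → α) (v : Fin b → α) :
    (Fin.castLE (by omega) j).removeNth (Fin.append u v ∘ Fin.cast h.symm) =
      Fin.append (j.removeNth u) v ∘ Fin.cast (by omega : n = a + b) := by
  obtain rfl : n = a + b := by omega
  funext r
  induction r using Fin.addCases with
  | left r =>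
    have hindex : Fin.cast h.symm ((Fin.castLE (by omega) j).succAbove (Fin.castAdd b r)) =
        Fin.castAdd b (j.succAbove r) := by
      apply Fin.ext
      simp only [Fin.succAbove, Fin.lt_def, Fin.val_cast, Fin.val_castAdd, Fin.val_castLE,
        apply_ite Fin.val, Fin.val_castSucc, Fin.val_succ]
    simp [Fin.removeNth_apply, hindex]
  | right r =>
    have hindex : Fin.cast h.symm ((Fin.castLE (by omega) j).succAbove (Fin.natAdd a r)) =
        Fin.natAdd (a + 1) r := by
      rw [Fin.succAbove_of_le_castSucc _ _ (by simp [Fin.le_def]; omega)]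
      apply Fin.ext
      simp only [Fin.val_cast, Fin.val_succ, Fin.val_natAdd]
      omega
    simp [Fin.removeNth_apply, hindex]

theorem injective2_append_comp_cast {α : Type*} {a b n : ℕ} (h : n = a + b) :
    Function.Injective2 fun (u : Fin a → α) (v : Fin b → α) => Fin.append u v ∘ Fin.cast h := by
  subst h
  intro u u' v v' huv
  exact Prod.ext_iff.1 ((Fin.appendEquiv a b).injective (a₁ := (u, v)) (a₂ := (u', v')) huv)

end Tuples

section Suffixes

theorem sum_filter_eq_zero_of_sum_mapDomain_eq_zero {ι α β δ M : Type*} [AddCommMonoid M]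
    [DecidableEq α] {e : α → β → δ} (he : Function.Injective2 e) {s : Finset ι} {t : ι → α}
    {g : ι → β →₀ M} (h : ∑ i ∈ s, (g i).mapDomain (e (t i)) = 0) (a : α) :
    ∑ i ∈ s with t i = a, g i = 0 := by
  ext b
  have hcoeff (i : ι) : (g i).mapDomain (e (t i)) (e a b) = if t i = a then g i b else 0 := by
    split_ifs with hi
    · rw [hi, Finsupp.mapDomain_apply (he.right a)]
    · refine Finsupp.mapDomain_of_notMem_range _ _ ?_
      rintro ⟨b', hb'⟩
      exact hi (he hb').1
  rw [Finsupp.finsetSum_apply, Finset.sum_filter, Finsupp.zero_apply]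
  simpa only [Finsupp.finsetSum_apply, hcoeff, Finsupp.zero_apply] using
    DFunLike.congr_fun h (e a b)

variable {K} {P : Type} [PartialOrder P]

theorem toTuples_face_castCGrp_prependC {a b n : ℕ} (hn : a + 1 + b = n + 1) (j : Fin (a + 1))
    {χ : OChain P (a + 1)} {ζ : CGrp K P b} (hζ : ζ ∈ chainsBelow χ) :
    toTuples (face (Fin.castLE (by omega) j) (castCGrp K P hn (prependC K P χ ζ))) =
      (toTuples ζ).mapDomain
        fun v => Fin.append (j.removeNth χ.1) v ∘ Fin.cast (by omega : n = a + b) := by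
  rw [toTuples_face, toTuples_castCGrp, toTuples_prependC hζ, ← Finsupp.mapDomain_comp,
    ← Finsupp.mapDomain_comp]
  exact congrArg (Finsupp.mapDomain · _) (funext (removeNth_append_comp_cast hn j χ.1))

open Classical in
theorem sum_suffix_eq_zero_of_face_eq_zero {a b n : ℕ} (hn : a + 1 + b = n + 1) {j : Fin (a + 1)}
    {X : Finset (OChain P (a + 1))} {ζ : OChain P (a + 1) → CGrp K P b}
    (hζ : ∀ χ ∈ X, ζ χ ∈ chainsBelow χ)
    (hface : face (Fin.castLE (by omega) j)
      (∑ χ ∈ X, castCGrp K P hn (prependC K P χ (ζ χ))) = 0) (τ : Fin a → P) :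
    ∑ χ ∈ X with j.removeNth χ.1 = τ, ζ χ = 0 := by
  apply toTuples_injective
  rw [map_sum, map_zero]
  refine sum_filter_eq_zero_of_sum_mapDomain_eq_zero
    (injective2_append_comp_cast (by omega : n = a + b)) ?_ τ
  rw [← map_zero toTuples, ← hface, map_sum, map_sum]
  exact Finset.sum_congr rfl fun χ hχ => (toTuples_face_castCGrp_prependC hn j (hζ χ hχ)).symm

theorem initSegs_finite {m : ℕ} (γ : CGrp K P (m + 1)) (s : ℕ) (h : s ≤ m + 1) :
    (initSegs K P γ s h).Finite := by
  refine ((γ.support.finite_toSet.image fun c => c.1 ∘ Fin.castLE h).preimage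
    Subtype.val_injective.injOn).subset ?_
  rintro χ ⟨c, hc, hχ⟩
  exact ⟨c, hc, funext hχ⟩

theorem removeNth_eq_iff_forall_ne {α : Type*} {n : ℕ} {j : Fin (n + 1)} {u v : Fin (n + 1) → α} :
    j.removeNth u = j.removeNth v ↔ ∀ r, r ≠ j → u r = v r := by
  simp [funext_iff, j.forall_iff_succAbove, Fin.removeNth]

theorem ell_representation_class_sum_general
    {S : (n : ℕ) → P → Submodule K (CGrp K P (n + 1))} (hS : IsStrictlyGraded S)
    {m ℓ : ℕ} (hℓm : ℓ ≤ m) {x : P} {γ : CGrp K P (m + 1)} (hγ : γ ∈ S m x)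
    {j : Fin (ℓ + 1)} (hj : j ≠ 0) {ζ : OChain P (ℓ + 1) → CGrp K P (m - ℓ)}
    (hsupp : ∀ χ ∈ initSegs K P γ (ℓ + 1) (by omega), ζ χ ∈ chainsBelow χ)
    (hrep : γ = ∑ᶠ χ ∈ initSegs K P γ (ℓ + 1) (by omega),
      castCGrp K P (by omega) (prependC K P χ (ζ χ)))
    (χ₀ : OChain P (ℓ + 1)) :
    ∑ᶠ χ' ∈ {χ' : OChain P (ℓ + 1) | χ' ∈ initSegs K P γ (ℓ + 1) (by omega) ∧
        ∀ r : Fin (ℓ + 1), r ≠ j → χ'.1 r = χ₀.1 r},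
      ζ χ' = 0 := by
  classical
  have hX : (initSegs K P γ (ℓ + 1) (by omega)).Finite := initSegs_finite γ _ _
  have hcast : Fin.castLE (by omega : ℓ + 1 ≤ m + 1) j ≠ 0 := (Fin.castLE_injective _).ne hj
  have hface : face (Fin.castLE (by omega) j) γ = 0 := hS.face_eq_zero hγ hcast
  rw [hrep, finsum_mem_eq_finite_toFinset_sum _ hX] at hface
  have hclass := sum_suffix_eq_zero_of_face_eq_zero (by omega)
    (fun χ hχ => hsupp χ (hX.mem_toFinset.1 hχ)) hface (j.removeNth χ₀.1)
  rw [← hclass, ← finsum_mem_coe_finset]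
  simp only [removeNth_eq_iff_forall_ne, Finset.coe_filter, hX.mem_toFinset]

end Suffixes

/-- Let `P` be a finite poset, `S_*(P) ⊆ C̃_*(P)` a synor complex,
`x ∈ P`, `γ ∈ S_m(P)^{(x)}` a principal synor chain, `1 ≤ j ≤ ℓ ≤ m`, and let
`γ = Σ_{χ ∈ X_ℓ^γ} χ * ζ_χ` be the `ℓ`-representation of `γ` (here encoded by the data
of the suffixes `ζ_χ`, supported strictly below `χ`, vanishing outside `X_ℓ^γ`, which
determines the `ℓ`-representation uniquely).  Then for every equivalence class `[χ]` of
the relation `∼_j` on `X_ℓ^γ` (agreement in all positions except possibly position `j`)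
one has `Σ_{χ' ∈ [χ]} ζ_{χ'} = 0`. -/
theorem ell_representation_class_sum (P : Type) [PartialOrder P] [Fintype P]
    (σ : SynorComplex K P) (m ℓ : ℕ) (hℓm : ℓ ≤ m) (x : P)
    (γ : CGrp K P (m + 1)) (hγ : γ ∈ σ.S m x)
    (j : Fin (ℓ + 1)) (hj : 1 ≤ (j : ℕ))
    (ζ : OChain P (ℓ + 1) → CGrp K P (m - ℓ))
    (hsupp : ∀ χ : OChain P (ℓ + 1), ζ χ ∈ Finsupp.supported K K
      {c : OChain P (m - ℓ) | ∀ (s : Fin (m - ℓ)) (r : Fin (ℓ + 1)), c.1 s < χ.1 r})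
    (hzero : ∀ χ ∉ initSegs K P γ (ℓ + 1) (by omega), ζ χ = 0)
    (hrep : γ = ∑ᶠ χ ∈ initSegs K P γ (ℓ + 1) (by omega),
      castCGrp K P (by omega) (prependC K P χ (ζ χ)))
    (χ₀ : OChain P (ℓ + 1)) (hχ₀ : χ₀ ∈ initSegs K P γ (ℓ + 1) (by omega)) :
    ∑ᶠ χ' ∈ {χ' : OChain P (ℓ + 1) | χ' ∈ initSegs K P γ (ℓ + 1) (by omega) ∧
        ∀ r : Fin (ℓ + 1), r ≠ j → χ'.1 r = χ₀.1 r},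
      ζ χ' = 0 := by
  exact ell_representation_class_sum_general σ.isStrictlyGraded hℓm hγ (by rintro rfl; simp at hj)
    (fun χ _ => hsupp χ) hrep χ₀

end
end
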